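/- Let p be an odd prime and let φ : ℚ_pˣ → ℤ_p be a continuous group homomorphism from the multiplicative group of units of ℚ_p to the additive group of ℤ_p, whose restriction to the subgroup 1+pℤ_p is not identically zero. Then there exist an integer t ≥ 0 and an element s ∈ 1+pℤ_p such that the kernel of φ is exactly {ζ·(p^{p^t}·s)^n : ζ ∈ μ_{p−1}, n ∈ ℤ}; that is, the positive integer k of Lemma 3.8 can be taken to be a power of p. -/

import Mathlib

open Filter Topology
lemma aux_pow (p : ℕ) [Fact p.Prime] (hp : Odd p) (n : ℕ) :
    ∃ y : ℤ_[p], (1 + (p : ℤ_[p])) ^ (p ^ n) = 1 + p ^ n * p * (1 + p * y) := by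
  have h3 : 3 ≤ p := by
    have := (Fact.out : p.Prime).two_le
    rcases hp with ⟨k, hk⟩
    omega
  have := ZMod.exists_one_add_mul_pow_prime_pow_eq (R := ℤ_[p]) (p := p) (Fact.out) (u := p) (v := p)
    dvd_rfl (by
      have : (p : ℤ_[p]) ^ 3 ∣ p ^ p := pow_dvd_pow _ h3
      convert this using 1; ring) 1 n
  simpa using this

lemma aux_approx (p : ℕ) [Fact p.Prime] (hp : Odd p) (z : ℤ_[p]) (n : ℕ) :
    ∃ m : ℕ, ∃ w : ℤ_[p], 1 + p * z = (1 + (p : ℤ_[p])) ^ m + p ^ (n + 1) * w := by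
  induction n with
  | zero => exact ⟨0, z, by simp⟩
  | succ n ih =>
    obtain ⟨m, w, h⟩ := ih
    obtain ⟨j, -, hj⟩ := PadicInt.exists_mem_range w
    rw [PadicInt.maximalIdeal_eq_span_p, Ideal.mem_span_singleton] at hj
    obtain ⟨v, hv⟩ := hj
    obtain ⟨y, hy⟩ := aux_pow p hp n
    refine ⟨m + p ^ n * j, ?_⟩
    -- (1 + p^(n+1) (1+p y))^j
    obtain ⟨a, ha⟩ : ∃ a : ℤ_[p], (1 + (p:ℤ_[p]) ^ n * p * (1 + p * y)) ^ j
        = 1 + j * p ^ (n + 1) + p ^ (n + 2) * a := by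
      generalize j = i
      induction i with
      | zero => exact ⟨0, by simp⟩
      | succ i ih =>
        obtain ⟨a, ha⟩ := ih
        rw [pow_succ, ha]
        refine ⟨a + y + i * p ^ n * (1 + p * y) + a * p ^ (n+1) * (1 + p * y), ?_⟩
        push_cast
        ring
    obtain ⟨b, hb⟩ : ∃ b : ℤ_[p], (1 + (p:ℤ_[p])) ^ m = 1 + p * b := by
      have : (p : ℤ_[p]) ∣ (1 + p) ^ m - 1 ^ m := 
        dvd_trans ⟨1, by ring⟩ (sub_dvd_pow_sub_pow (1 + (p:ℤ_[p])) 1 m)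
      obtain ⟨b, hb⟩ := this
      exact ⟨b, by rw [one_pow] at hb; rw [← hb]; ring⟩
    rw [pow_add, pow_mul, hy, ha, h, hb]
    have hw : w = j + p * v := by rw [← hv]; ring
    refine ⟨v - b * j - a - p * b * a, ?_⟩
    rw [hw]
    ring

lemma exists_K (p : ℕ) [Fact p.Prime] (hp : Odd p) :
    ∃ K : ℤ_[p] → ℚ_[p]ˣ, Continuous K ∧ (∀ a b, K (a + b) = K a * K b) ∧
      (∀ z : ℤ_[p], ∃ a, (K a : ℚ_[p]) = 1 + p * z) ∧
      (∀ a, ∃ z : ℤ_[p], (K a : ℚ_[p]) = 1 + p * z) := by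
  have hpn : Tendsto (fun n : ℕ => (p : ℤ_[p]) ^ n) atTop (𝓝 0) := by
    rw [tendsto_pow_atTop_nhds_zero_iff_norm_lt_one]
    exact (PadicInt.norm_lt_one_iff_dvd _).2 dvd_rfl
  let κ : AddChar ℤ_[p] ℤ_[p] := PadicInt.addChar_of_value_at_one (p : ℤ_[p]) hpn
  have hc : Continuous κ := PadicInt.continuous_addChar_of_value_at_one hpn
  have hκ1 : κ 1 = 1 + p := PadicInt.addChar_of_value_at_one_def hpn
  have hκn (n : ℕ) : κ n = (1 + p) ^ n := by
    rw [← hκ1, ← AddChar.map_nsmul_eq_pow]; simp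
  have hinv (a) : κ a * κ (-a) = 1 := by
    rw [← AddChar.map_add_eq_mul]; simp
  have hdiv (a) : ∃ z, κ a = 1 + p * z := by
    have hcl : IsClosed {x : ℤ_[p] | ‖x - 1‖ ≤ (p : ℝ) ^ (-(1 : ℕ) : ℤ)} :=
      isClosed_le (by fun_prop) (by fun_prop)
    have key : κ a ∈ {x : ℤ_[p] | ‖x - 1‖ ≤ (p : ℝ) ^ (-(1 : ℕ) : ℤ)} := by
      refine PadicInt.denseRange_natCast.induction_on (p := fun a => κ a ∈ _) a
        (hcl.preimage hc) fun n => ?_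
      rw [Set.mem_ofPred_eq, PadicInt.norm_le_pow_iff_mem_span_pow, Ideal.mem_span_singleton, hκn,
        pow_one]
      have h1 := sub_dvd_pow_sub_pow (1 + (p:ℤ_[p])) 1 n
      rw [one_pow, add_sub_cancel_left] at h1
      exact h1
    rw [Set.mem_ofPred_eq, PadicInt.norm_le_pow_iff_mem_span_pow, Ideal.mem_span_singleton] at key
    obtain ⟨z, hz⟩ := key
    exact ⟨z, by rw [pow_one] at hz; rw [← hz]; ring⟩
  have hsurj (z : ℤ_[p]) : ∃ a, κ a = 1 + p * z := by
    have hcl : IsClosed (Set.range κ) := (isCompact_range hc).isClosed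
    change 1 + p * z ∈ Set.range κ
    rw [← hcl.closure_eq]
    choose m w h using aux_approx p hp z
    refine mem_closure_of_tendsto (f := fun n => κ (m n)) (b := atTop) ?_
      (Eventually.of_forall fun n => ⟨_, rfl⟩)
    rw [tendsto_iff_norm_sub_tendsto_zero]
    have h0 : Tendsto (fun n : ℕ => ‖(p : ℤ_[p]) ^ (n + 1)‖) atTop (𝓝 0) := by
      simpa using (hpn.comp (tendsto_add_atTop_nat 1)).norm
    refine squeeze_zero (fun _ => norm_nonneg _) (fun n => ?_) h0
    rw [hκn, h n, sub_add_cancel_left, norm_neg, norm_mul]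
    exact mul_le_of_le_one_right (norm_nonneg _) (PadicInt.norm_le_one _)
  refine ⟨fun a => ⟨κ a, κ (-a), ?_, ?_⟩, ?_, ?_, ?_, ?_⟩
  · rw [← PadicInt.coe_mul, hinv a, PadicInt.coe_one]
  · rw [mul_comm, ← PadicInt.coe_mul, hinv a, PadicInt.coe_one]
  · rw [Units.continuous_iff]
    constructor
    · exact continuous_subtype_val.comp hc
    · exact continuous_subtype_val.comp (hc.comp continuous_neg)
  · intro a b
    ext
    simp [AddChar.map_add_eq_mul]
  · intro z
    obtain ⟨a, ha⟩ := hsurj z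
    exact ⟨a, by simp [ha]⟩
  · intro a
    obtain ⟨z, hz⟩ := hdiv a
    exact ⟨z, by simp [hz]⟩

lemma aux_units (p : ℕ) [Fact p.Prime] (q : ℚ_[p]ˣ) :
    ∃ (m : ℤ) (z : ℤ_[p]), ((q : ℚ_[p]) / (p : ℚ_[p]) ^ m) ^ (p - 1) = 1 + p * z := by
  have hp0 : (p : ℚ_[p]) ≠ 0 := by exact_mod_cast (Fact.out : p.Prime).ne_zero
  refine ⟨(q : ℚ_[p]).valuation, ?_⟩
  have hn : ‖(q : ℚ_[p]) / (p : ℚ_[p]) ^ (q : ℚ_[p]).valuation‖ = 1 := by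
    rw [norm_div, Padic.norm_eq_zpow_neg_valuation q.ne_zero, Padic.norm_p_zpow]
    exact div_self (zpow_ne_zero _ (by exact_mod_cast (Fact.out : p.Prime).ne_zero))
  obtain ⟨x, hx⟩ : ∃ x : ℤ_[p], (x : ℚ_[p]) = (q : ℚ_[p]) / (p : ℚ_[p]) ^ (q : ℚ_[p]).valuation :=
    ⟨⟨_, hn.le⟩, rfl⟩
  rw [← hx] at hn ⊢
  have h1 : (p : ℤ_[p]) ∣ x ^ (p - 1) - 1 := by
    rw [← Ideal.mem_span_singleton, ← PadicInt.maximalIdeal_eq_span_p, ← PadicInt.ker_toZMod,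
      RingHom.mem_ker, map_sub, map_pow, map_one, sub_eq_zero]
    apply ZMod.pow_card_sub_one_eq_one
    intro h0
    rw [← RingHom.mem_ker, PadicInt.ker_toZMod, PadicInt.maximalIdeal_eq_span_p,
      Ideal.mem_span_singleton, ← PadicInt.norm_lt_one_iff_dvd] at h0
    rw [← PadicInt.norm_def] at hn
    exact h0.ne hn
  obtain ⟨z, hz⟩ := h1
  refine ⟨z, ?_⟩
  have : x ^ (p - 1) = 1 + p * z := by rw [← hz]; ring
  exact_mod_cast congrArg (fun x : ℤ_[p] => (x : ℚ_[p])) this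

theorem stmt_1 (p : ℕ) [Fact p.Prime] (hp : Odd p)
    (φ : ℚ_[p]ˣ → ℤ_[p])
    (hhom : ∀ a b : ℚ_[p]ˣ, φ (a * b) = φ a + φ b)
    (hcont : Continuous φ)
    (hnt : ∃ u : ℚ_[p]ˣ, (∃ y : ℤ_[p], (u : ℚ_[p]) = 1 + p * y) ∧ φ u ≠ 0) :
    ∃ (t : ℕ) (s : ℤ_[p]), 0 ≤ t ∧ (∃ y : ℤ_[p], s = 1 + p * y) ∧
      ∀ q : ℚ_[p]ˣ, φ q = 0 ↔
        ∃ (ζ : ℚ_[p]) (n : ℤ), ζ ^ (p - 1) = 1 ∧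
          (q : ℚ_[p]) = ζ * ((p : ℚ_[p]) ^ (p ^ t) * (s : ℚ_[p])) ^ n := by
  have hpp : p.Prime := Fact.out
  have hp0 : (p : ℚ_[p]) ≠ 0 := by exact_mod_cast hpp.ne_zero
  obtain ⟨K, hKc, hKa, hKs, hK1⟩ := exists_K p hp
  let Φ : Additive ℚ_[p]ˣ →+ ℤ_[p] := AddMonoidHom.mk' (fun x => φ x.toMul) (fun a b => hhom _ _)
  have hzpow (x : ℚ_[p]ˣ) (n : ℤ) : φ (x ^ n) = n * φ x := by
    have := map_zsmul Φ n (Additive.ofMul x)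
    rw [zsmul_eq_mul] at this
    exact this
  have hpow (x : ℚ_[p]ˣ) (n : ℕ) : φ (x ^ n) = n * φ x := by
    simpa using hzpow x n
  have hone : φ 1 = 0 := by simpa using hpow 1 0
  let Kh : ℤ_[p] →+ Additive ℚ_[p]ˣ :=
    AddMonoidHom.mk' (fun a => Additive.ofMul (K a)) (fun a b => hKa a b)
  have hKz (n : ℤ) (a : ℤ_[p]) : K (n * a) = K a ^ n := by
    have := map_zsmul Kh n a
    rw [zsmul_eq_mul] at this
    exact this
  have hKn (n : ℕ) (a : ℤ_[p]) : K (n * a) = K a ^ n := by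
    simpa using hKz n a
  have hlin (a : ℤ_[p]) : φ (K a) = a * φ (K 1) := by
    refine congrFun (PadicInt.denseRange_natCast.equalizer (hcont.comp hKc)
      (continuous_id.mul continuous_const) (funext fun n => ?_)) a
    have := hKn n 1
    rw [mul_one] at this
    simp [this, hpow]
  set c := φ (K 1) with hcdef
  have hc0 : c ≠ 0 := by
    intro h0
    obtain ⟨u, ⟨y, hy⟩, hu⟩ := hnt
    obtain ⟨a, ha⟩ := hKs y
    have : u = K a := Units.ext (hy.trans ha.symm)
    exact hu (by rw [this, hlin, h0, mul_zero])
  let P : ℚ_[p]ˣ := Units.mk0 p hp0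
  set d := φ P with hd
  have hex : ∃ t : ℕ, c ∣ p ^ t * d := by
    refine ⟨c.valuation, Dvd.dvd.mul_right ?_ _⟩
    refine ⟨((PadicInt.unitCoeff hc0)⁻¹ : ℤ_[p]ˣ), ?_⟩
    have h1 := PadicInt.unitCoeff_spec hc0
    have h2 : ((PadicInt.unitCoeff hc0 : ℤ_[p]ˣ) : ℤ_[p]) *
      ((PadicInt.unitCoeff hc0)⁻¹ : ℤ_[p]ˣ) = 1 := Units.mul_inv _
    linear_combination (-(((PadicInt.unitCoeff hc0)⁻¹ : ℤ_[p]ˣ) : ℤ_[p])) * h1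
      - (p : ℤ_[p]) ^ c.valuation * h2
  classical
  obtain ⟨t, ⟨a, ha⟩, hmin⟩ : ∃ t : ℕ, c ∣ p ^ t * d ∧ ∀ r < t, ¬ c ∣ p ^ r * d :=
    ⟨Nat.find hex, Nat.find_spec hex, fun r hr => Nat.find_min hex hr⟩
  obtain ⟨y, hy⟩ := hK1 (-a)
  have hscoe : ((1 + p * y : ℤ_[p]) : ℚ_[p]) = K (-a) := by rw [hy]; push_cast; ring
  refine ⟨t, 1 + p * y, Nat.zero_le _, ⟨y, rfl⟩, fun q => ?_⟩
  rw [hscoe]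
  have hG : φ (P ^ (p ^ t) * K (-a)) = 0 := by
    rw [hhom, hpow, hlin, ← hd]
    push_cast
    rw [ha]; ring
  have hGc : ((P ^ (p ^ t) * K (-a) : ℚ_[p]ˣ) : ℚ_[p]) = (p : ℚ_[p]) ^ (p ^ t) * K (-a) := by
    simp [P]
  have hp1 : ((p - 1 : ℕ) : ℤ_[p]) ≠ 0 := by
    have := hpp.two_le
    exact_mod_cast (by omega : p - 1 ≠ 0)
  constructor
  · intro hq
    obtain ⟨m, z, hz⟩ := aux_units p q
    obtain ⟨b, hb⟩ := hKs z
    have hx : (q * P ^ (-m)) ^ (p - 1) = K b := by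
      ext
      rw [hb, ← hz]
      simp [P, div_eq_mul_inv]
    have hφ : ((p - 1 : ℕ) : ℤ_[p]) * (-m * d) = b * c := by
      have := congrArg φ hx
      rw [hpow, hhom, hzpow, hq, hlin] at this
      rw [← this]; push_cast; ring
    -- `p - 1` is a unit
    obtain ⟨e, he⟩ : ∃ e : ℤ_[p], ((p - 1 : ℕ) : ℤ_[p]) * e = 1 := by
      have hu : IsUnit ((p - 1 : ℕ) : ℤ_[p]) := by
        rw [PadicInt.isUnit_iff]
        by_contra hne
        have hlt := lt_of_le_of_ne (PadicInt.norm_le_one _) hne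
        have := (PadicInt.norm_int_lt_one_iff_dvd (p := p) ((p - 1 : ℕ) : ℤ)).1 (by simpa using hlt)
        have := Nat.le_of_dvd (by have := hpp.two_le; omega) (Int.natCast_dvd_natCast.1 this)
        have := hpp.two_le
        omega
      exact hu.exists_right_inv
    have hmd : c ∣ m * d := ⟨-(e * b), by linear_combination (-e) * hφ + (-m * d) * he⟩
    have hdm : ((p ^ t : ℕ) : ℤ) ∣ m := by
      by_contra hnd
      have hm0 : m ≠ 0 := by rintro rfl; exact hnd (dvd_zero _)
      have hfin : FiniteMultiplicity (p : ℤ) m := by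
        rw [Int.finiteMultiplicity_iff]
        exact ⟨by simpa using hpp.ne_one, hm0⟩
      obtain ⟨m', hm', hnm'⟩ := hfin.exists_eq_pow_mul_and_not_dvd
      set r := multiplicity (p : ℤ) m
      have hrt : r < t := by
        by_contra hle
        push Not at hle
        apply hnd
        rw [hm']
        push_cast
        exact Dvd.dvd.mul_right (pow_dvd_pow _ hle) _
      have hu : IsUnit (m' : ℤ_[p]) := by
        rw [PadicInt.isUnit_iff]
        by_contra hne
        exact hnm' ((PadicInt.norm_int_lt_one_iff_dvd m').1
          (lt_of_le_of_ne (PadicInt.norm_le_one _) hne))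
      apply hmin r hrt
      rw [hm'] at hmd
      push_cast at hmd
      have h2 : c ∣ m' * (p ^ r * d) := by
        convert hmd using 1; ring
      exact (hu.dvd_mul_left).1 h2
    obtain ⟨n, hn⟩ := hdm
    have hbval : b = n * (((p - 1 : ℕ) : ℤ_[p]) * -a) := by
      apply mul_right_cancel₀ hc0
      rw [← hφ, hn]
      push_cast
      linear_combination (-((p - 1 : ℕ) : ℤ_[p]) * n) * ha
    rw [hbval, hKz, hKn] at hx
    refine ⟨((q * ((P ^ (p ^ t) * K (-a)) ^ n)⁻¹ : ℚ_[p]ˣ) : ℚ_[p]), n, ?_, ?_⟩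
    · rw [← Units.val_pow_eq_pow_val, Units.val_eq_one]
      have h3 : q * ((P ^ (p ^ t) * K (-a)) ^ n)⁻¹ = (q * P ^ (-m)) * (K (-a) ^ n)⁻¹ := by
        rw [mul_zpow, hn, zpow_neg, zpow_mul, zpow_natCast, mul_inv, mul_assoc]
      rw [h3, mul_pow, hx, inv_pow, ← zpow_natCast, ← zpow_natCast, ← zpow_mul, ← zpow_mul,
        mul_comm, mul_comm n, inv_mul_cancel]
    · rw [← hGc, ← Units.val_zpow_eq_zpow_val, ← Units.val_mul, inv_mul_cancel_right]
  · rintro ⟨ζ, n, hζ, hq⟩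
    have hζ0 : ζ ≠ 0 := by
      rintro rfl
      apply q.ne_zero
      rw [hq, zero_mul]
    have hq' : q = Units.mk0 ζ hζ0 * (P ^ (p ^ t) * K (-a)) ^ n := by
      ext
      rw [Units.val_mul, Units.val_zpow_eq_zpow_val, hGc, hq]
      rfl
    have hz1 : Units.mk0 ζ hζ0 ^ (p - 1) = 1 := by ext; simpa using hζ
    have hz2 := hpow (Units.mk0 ζ hζ0) (p - 1)
    rw [hz1, hone] at hz2
    have hz3 := (mul_eq_zero.1 hz2.symm).resolve_left hp1
    rw [hq', hhom, hz3, hzpow, hG]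
    simp
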